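/- For the Hilbert–Lie algebra g = u₂(H) with H a Hilbert space over 𝕂 ∈ {ℝ, ℂ, ℍ}, the bracket-norm constant c_g = sup{‖[x,y]‖ : ‖x‖,‖y‖ ≤ 1} satisfies c_g² = dim_ℝ 𝕂, i.e., c_g = 1 for 𝕂 = ℝ, c_g = √2 for 𝕂 = ℂ, and c_g = 2 for 𝕂 = ℍ. -/

import Mathlib

/-!
For a finite skew-Hermitian matrix `X` with eigenvalues `i λ_j` and any `Y`, written in an
orthonormal eigenbasis of `X`, the entries of `[X, Y]` are `i (λ_j - λ_k) Y_jk`. Since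
`(λ_j - λ_k)² ≤ 2 (λ_j² + λ_k²) ≤ 2 ‖X‖²` for `j ≠ k`, this gives `‖[X, Y]‖² ≤ 2 ‖X‖² ‖Y‖²`
(`fro_comm_le_complex`). If `X` and `Y` are real, the spectrum is symmetric under `λ ↦ -λ` with
multiplicities, so `2 (λ_j² + λ_k²) ≤ ‖X‖²` whenever both eigenvalues are nonzero and distinct,
except when they are opposite and simple; then the two eigenvectors are conjugate to each other and
`Y_jk = 0` by skew-symmetry. Hence the constant is `1` over `ℝ` (`fro_comm_le_real`). Finite
corners of the operator matrices in a Hilbert basis carry these inequalities to skew-adjoint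
Hilbert–Schmidt operators (`hs_comm_le`). The quaternionic bound is the complex one, rescaled by
the factor `1/2` in the norm.

The constants are attained on finite-rank operators (`ofMat`): by multiples of two orthogonal
elements of `𝔰𝔲(2)` over `ℂ`, by the same pair on a quaternionic line over `ℍ`, and by left
multiplications with the quaternion units `i` and `j` on `ℝ⁴ = ℍ` over `ℝ`.
-/

/-- The bracket-norm constant of `u₂(H)` for a Hilbert space `H` over `𝕜 ∈ {ℝ, ℂ}`:
the supremum of `‖[X,Y]‖₂` over skew-adjoint Hilbert–Schmidt operators of Hilbert–Schmidt
norm at most `1`. -/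
noncomputable def cBracket {𝕜 H : Type*} [RCLike 𝕜] [NormedAddCommGroup H]
    [InnerProductSpace 𝕜 H] [CompleteSpace H] {J : Type*} (e : HilbertBasis J 𝕜 H) : ℝ :=
  sSup {r : ℝ | ∃ X Y : H →L[𝕜] H,
    ContinuousLinearMap.adjoint X = -X ∧ ContinuousLinearMap.adjoint Y = -Y ∧
    Summable (fun i => ‖X (e i)‖ ^ 2) ∧ Summable (fun i => ‖Y (e i)‖ ^ 2) ∧
    (∑' i, ‖X (e i)‖ ^ 2) ≤ 1 ∧ (∑' i, ‖Y (e i)‖ ^ 2) ≤ 1 ∧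
    r = Real.sqrt (∑' i, ‖⁅X, Y⁆ (e i)‖ ^ 2)}

/-- The squared Frobenius norm `Σ |a_ij|²`. -/
noncomputable def fro {𝕜 n : Type*} [RCLike 𝕜] [Fintype n] (A : Matrix n n 𝕜) : ℝ :=
  ∑ i, ∑ j, ‖A i j‖ ^ 2

/-! ### Commutators of finite skew-Hermitian matrices -/

section MatrixBounds
open Matrix

variable {𝕜 n : Type*} [RCLike 𝕜] [Fintype n]

lemma fro_nonneg (A : Matrix n n 𝕜) : 0 ≤ fro A := by
  unfold fro; positivity

lemma fro_eq_trace (A : Matrix n n 𝕜) : ((fro A : ℝ) : 𝕜) = (Aᴴ * A).trace := by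
  simp only [fro, trace, diag_apply, mul_apply, conjTranspose_apply]
  rw [Finset.sum_comm]
  push_cast
  refine Finset.sum_congr rfl fun i _ => Finset.sum_congr rfl fun j _ => ?_
  rw [RCLike.star_def, RCLike.conj_mul]

lemma fro_unitary_conj [DecidableEq n] {U : Matrix n n 𝕜} (hU : U * Uᴴ = 1)
    (A : Matrix n n 𝕜) : fro (Uᴴ * A * U) = fro A := by
  have h : ((fro (Uᴴ * A * U) : ℝ) : 𝕜) = ((fro A : ℝ) : 𝕜) := by
    rw [fro_eq_trace, fro_eq_trace]
    have : (Uᴴ * A * U)ᴴ * (Uᴴ * A * U) = Uᴴ * (Aᴴ * A * U) := by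
      simp only [conjTranspose_mul, conjTranspose_conjTranspose]
      calc Uᴴ * (Aᴴ * U) * (Uᴴ * A * U) = Uᴴ * Aᴴ * (U * Uᴴ) * A * U := by
            simp only [Matrix.mul_assoc]
        _ = _ := by rw [hU]; simp only [Matrix.mul_one, Matrix.mul_assoc]
    rw [this, Matrix.trace_mul_comm, Matrix.mul_assoc, hU, Matrix.mul_one]
  exact_mod_cast h

lemma exists_unitary_diagonal [DecidableEq n] {X : Matrix n n ℂ} (hX : Xᴴ = -X) :
    ∃ (U : Matrix n n ℂ) (l : n → ℝ), U * Uᴴ = 1 ∧ Uᴴ * U = 1 ∧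
      Uᴴ * X * U = diagonal fun i => Complex.I * (l i : ℂ) := by
  have hH : (Complex.I • X).IsHermitian := by
    simp [IsHermitian, conjTranspose_smul, hX]
  refine ⟨hH.eigenvectorUnitary, fun i => -hH.eigenvalues i,
    Unitary.coe_mul_star_self _, Unitary.coe_star_mul_self _, ?_⟩
  have h := hH.conjStarAlgAut_star_eigenvectorUnitary
  rw [Unitary.conjStarAlgAut_star_apply] at h
  rw [mul_smul_comm, smul_mul_assoc] at h
  have h2 := congrArg (fun M => (-Complex.I) • M) h
  simp only [smul_smul, neg_mul, Complex.I_mul_I, neg_neg, one_smul] at h2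
  rw [← star_eq_conjTranspose, h2]
  ext i j
  by_cases hij : i = j <;> simp [hij]

lemma fro_diagonal [DecidableEq n] (l : n → ℝ) :
    fro (diagonal fun i => Complex.I * (l i : ℂ)) = ∑ i, l i ^ 2 := by
  unfold fro
  refine Finset.sum_congr rfl fun i _ => ?_
  rw [Finset.sum_eq_single i]
  · simp
  · intro j _ hj; simp [hj.symm]
  · simp

/-- In an orthonormal eigenbasis of `X`, the map `Y ↦ [X, Y]` multiplies the entries of `Y` by
differences of eigenvalues, so a bound for those differences at the nonzero entries of `Y`
is a bound for the commutator. -/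
lemma fro_comm_le_of_eigen [DecidableEq n] {X Y U : Matrix n n ℂ} {l : n → ℝ} {c : ℝ}
    (hU : U * Uᴴ = 1) (hD : Uᴴ * X * U = diagonal fun i => Complex.I * (l i : ℂ))
    (h : ∀ i j, (Uᴴ * Y * U) i j ≠ 0 → (l i - l j) ^ 2 ≤ c * ∑ i, l i ^ 2) :
    fro (X * Y - Y * X) ≤ c * (fro X * fro Y) := by
  rw [← fro_unitary_conj hU (X * Y - Y * X), ← fro_unitary_conj hU X, ← fro_unitary_conj hU Y]
  have e : Uᴴ * (X * Y - Y * X) * U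
      = (Uᴴ * X * U) * (Uᴴ * Y * U) - (Uᴴ * Y * U) * (Uᴴ * X * U) := by
    have e1 : ∀ A B : Matrix n n ℂ, (Uᴴ * A * U) * (Uᴴ * B * U) = Uᴴ * (A * B) * U := by
      intro A B
      calc (Uᴴ * A * U) * (Uᴴ * B * U) = Uᴴ * A * (U * Uᴴ) * B * U := by
            simp only [Matrix.mul_assoc]
        _ = _ := by rw [hU]; simp only [Matrix.mul_one, Matrix.mul_assoc]
    rw [e1, e1, Matrix.mul_sub, Matrix.sub_mul]
  rw [e, hD, fro_diagonal, ← mul_assoc c]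
  generalize Uᴴ * Y * U = Z at h ⊢
  generalize c * ∑ i, l i ^ 2 = K at h ⊢
  unfold fro
  rw [Finset.mul_sum]
  refine Finset.sum_le_sum fun i _ => ?_
  rw [Finset.mul_sum]
  refine Finset.sum_le_sum fun j _ => ?_
  have e2 : (diagonal (fun i => Complex.I * (l i : ℂ)) * Z
      - Z * diagonal fun i => Complex.I * (l i : ℂ)) i j
      = Complex.I * ((l i - l j : ℝ) : ℂ) * Z i j := by
    rw [Matrix.sub_apply, diagonal_mul, mul_diagonal]; push_cast; ring
  rw [e2, norm_mul, norm_mul, Complex.norm_I, Complex.norm_real, one_mul, mul_pow,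
    Real.norm_eq_abs, sq_abs]
  by_cases hz : Z i j = 0
  · simp [hz]
  · exact mul_le_mul_of_nonneg_right (h i j hz) (by positivity)

lemma fro_comm_le_complex (X Y : Matrix n n ℂ) (hX : Xᴴ = -X) :
    fro (X * Y - Y * X) ≤ 2 * (fro X * fro Y) := by
  classical
  obtain ⟨U, l, hU, -, hD⟩ := exists_unitary_diagonal hX
  refine fro_comm_le_of_eigen hU hD fun i j _ => ?_
  by_cases hij : i = j
  · subst hij; simp; positivity
  · have := Finset.sum_le_univ_sum_of_nonneg (s := {i, j}) (f := fun i => l i ^ 2)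
      fun i => sq_nonneg _
    rw [Finset.sum_pair hij] at this
    nlinarith [sq_nonneg (l i + l j)]

/-- Two eigenvalues of a real skew-symmetric matrix `X` satisfy `(a - b)² ≤ ‖X‖²` unless they are
simple and opposite; in that case the eigenvectors are complex conjugate to each other and
the corresponding entry of every real skew-symmetric `Y` vanishes. -/
lemma sq_sub_le_of_entry_ne_zero [DecidableEq n] {X Y U : Matrix n n ℂ} {l : n → ℝ}
    (hU : U * Uᴴ = 1) (hU' : Uᴴ * U = 1)
    (hD : Uᴴ * X * U = diagonal fun i => Complex.I * (l i : ℂ))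
    (hX : Xᵀ = -X) (hY : Yᵀ = -Y) (hY' : Yᴴ = -Y) (j k : n) (h : (Uᴴ * Y * U) j k ≠ 0) :
    (l j - l k) ^ 2 ≤ 1 * ∑ i, l i ^ 2 := by
  -- `W` expresses complex conjugation in the eigenbasis.
  set W := Uᵀ * U with hW
  set D : Matrix n n ℂ := diagonal fun i => Complex.I * (l i : ℂ) with hDdef
  set Z := Uᴴ * Y * U with hZ
  have conj_eq : ∀ A : Matrix n n ℂ, W * (Uᴴ * A * U) = Uᵀ * A * U := fun A => by
    calc W * (Uᴴ * A * U) = Uᵀ * (U * Uᴴ) * A * U := by simp only [hW, Matrix.mul_assoc]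
      _ = _ := by rw [hU, Matrix.mul_one]
  have hWt : Wᵀ = W := by simp [hW]
  have hWD : ∀ a b, W a b ≠ 0 → l b = -l a := by
    intro a b hab
    have h1 : (W * D)ᵀ = -(W * D) := by
      rw [← hD, conj_eq]
      simp only [transpose_mul, transpose_transpose, hX, Matrix.mul_assoc, Matrix.mul_neg,
        Matrix.neg_mul]
    rw [transpose_mul, hWt, hDdef, diagonal_transpose] at h1
    have h2 := congrFun (congrFun h1 a) b
    rw [diagonal_mul, Matrix.neg_apply, mul_diagonal] at h2
    have h3 : Complex.I * W a b * (((l a + l b : ℝ)) : ℂ) = 0 := by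
      push_cast; linear_combination h2
    have h4 : ((l a + l b : ℝ) : ℂ) = 0 :=
      (mul_eq_zero.1 h3).resolve_left (mul_ne_zero Complex.I_ne_zero hab)
    have := Complex.ofReal_eq_zero.1 h4
    linarith
  have hWrow : ∀ a, ∃ b, W a b ≠ 0 := by
    intro a
    by_contra! hc
    have hWW : W * (Uᴴ * Uᴴᵀ) = 1 := by
      have : U * (Uᴴ * Uᴴᵀ) = Uᴴᵀ := by rw [← Matrix.mul_assoc, hU, Matrix.one_mul]
      rw [hW, Matrix.mul_assoc, this, ← transpose_mul, hU', transpose_one]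
    have := congrFun (congrFun hWW a) a
    rw [mul_apply] at this
    simp [hc] at this
  have hWZ : ∀ a, ∑ b, W a b * Z b a = 0 := by
    intro a
    have h1 : (W * Z)ᵀ = -(W * Z) := by
      rw [hZ, conj_eq]
      simp only [transpose_mul, transpose_transpose, hY, Matrix.mul_assoc, Matrix.mul_neg,
        Matrix.neg_mul]
    have h2 := congrFun (congrFun h1 a) a
    rw [transpose_apply, Matrix.neg_apply, mul_apply] at h2
    exact self_eq_neg.1 h2
  have hZsym : Z k j ≠ 0 := by
    have h1 : Zᴴ = -Z := by
      simp only [hZ, conjTranspose_mul, conjTranspose_conjTranspose, hY', Matrix.mul_assoc,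
        Matrix.mul_neg, Matrix.neg_mul]
    have h2 := congrFun (congrFun h1 j) k
    rw [conjTranspose_apply, Matrix.neg_apply] at h2
    intro h0
    rw [h0, star_zero] at h2
    exact h (neg_eq_zero.1 h2.symm)
  -- An opposite eigenvalue at a nonvanishing entry of `Z` is not simple.
  have hmult : ∀ a b, Z b a ≠ 0 → ∃ c, c ≠ b ∧ l c = -l a := by
    intro a b hba
    by_contra! hc
    have h0 := hWZ a
    have hz : ∀ c, c ≠ b → W a c = 0 := fun c hcb => by
      by_contra hw
      exact hc c hcb (hWD a c hw)
    rw [Finset.sum_eq_single b (fun c _ hcb => by rw [hz c hcb, zero_mul]) (by simp)] at h0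
    obtain ⟨d, hd⟩ := hWrow a
    have hdb : d = b := by
      by_contra hdb
      exact hd (hz d hdb)
    subst hdb
    exact (mul_ne_zero hd hba) h0
  have four : ∀ a b c d : n, a ≠ b → a ≠ c → a ≠ d → b ≠ c → b ≠ d → c ≠ d →
      l a ^ 2 + l b ^ 2 + l c ^ 2 + l d ^ 2 ≤ ∑ i, l i ^ 2 := by
    intro a b c d h1 h2 h3 h4 h5 h6
    have := Finset.sum_le_univ_sum_of_nonneg (s := {a, b, c, d}) (f := fun i => l i ^ 2)
      fun i => sq_nonneg _
    rw [Finset.sum_insert (by simp [h1, h2, h3]), Finset.sum_insert (by simp [h4, h5]),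
      Finset.sum_pair h6] at this
    linarith
  have one : ∀ a : n, l a ^ 2 ≤ ∑ i, l i ^ 2 := fun a =>
    Finset.single_le_sum (f := fun i => l i ^ 2) (fun i _ => sq_nonneg _) (Finset.mem_univ a)
  rw [one_mul]
  by_cases hj0 : l j = 0
  · rw [hj0]; simpa using one k
  by_cases hk0 : l k = 0
  · rw [hk0]; simpa using one j
  by_cases hjk : l j = l k
  · rw [hjk, sub_self]; exact (by positivity : (0:ℝ) ≤ _).trans' (by norm_num)
  obtain ⟨p, hpk, hp⟩ := hmult j k hZsym
  obtain ⟨q, hqj, hq⟩ := hmult k j h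
  have := four j k p q (fun e => hjk (by rw [e]))
    (fun e => hj0 (by rw [← e] at hp; linarith)) hqj.symm hpk.symm
    (fun e => hk0 (by rw [← e] at hq; linarith))
    (fun e => hjk (by rw [e, hq] at hp; linarith))
  rw [hp, hq] at this
  nlinarith [sq_nonneg (l j + l k)]

lemma fro_comm_le_real (X Y : Matrix n n ℝ) (hX : Xᴴ = -X) (hY : Yᴴ = -Y) :
    fro (X * Y - Y * X) ≤ 1 * (fro X * fro Y) := by
  classical
  have hmap : ∀ A : Matrix n n ℝ, fro (A.map Complex.ofRealHom) = fro A := fun A => by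
    simp [fro]
  have ht : ∀ A : Matrix n n ℝ, Aᴴ = -A →
      (A.map Complex.ofRealHom)ᵀ = -A.map Complex.ofRealHom := fun A hA => by
    ext i j
    have := congrFun (congrFun hA i) j
    simp only [conjTranspose_apply, star_trivial, Matrix.neg_apply] at this
    simp [this]
  have hh : ∀ A : Matrix n n ℝ, Aᴴ = -A →
      (A.map Complex.ofRealHom)ᴴ = -A.map Complex.ofRealHom := fun A hA => by
    rw [← ht A hA]; ext i j; simp
  obtain ⟨U, l, hU, hU', hD⟩ := exists_unitary_diagonal (hh X hX)
  rw [← hmap X, ← hmap Y, ← hmap]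
  have := fro_comm_le_of_eigen (c := 1) hU hD
    (sq_sub_le_of_entry_ne_zero hU hU' hD (ht X hX) (ht Y hY) (hh Y hY))
  rwa [← Matrix.map_mul, ← Matrix.map_mul, ← Matrix.map_sub _ (by simp)] at this

end MatrixBounds

/-! ### Passage to Hilbert–Schmidt operators -/

section HilbertSchmidt
open Filter Topology ContinuousLinearMap

variable {𝕜 H J : Type*} [RCLike 𝕜] [NormedAddCommGroup H] [InnerProductSpace 𝕜 H]

lemma hasSum_norm_inner_sq (e : HilbertBasis J 𝕜 H) (x : H) :
    HasSum (fun i => ‖inner 𝕜 (e i) x‖ ^ 2) (‖x‖ ^ 2) := by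
  have h := (e.hasSum_inner_mul_inner x x).mapL (RCLike.reCLM (K := 𝕜))
  have h1 : ∀ i, RCLike.reCLM (inner 𝕜 x (e i) * inner 𝕜 (e i) x) = ‖inner 𝕜 (e i) x‖ ^ 2 := by
    intro i
    rw [← inner_conj_symm x, RCLike.conj_mul, ← RCLike.ofReal_pow]
    exact RCLike.ofReal_re _
  have h2 : RCLike.reCLM (inner 𝕜 x x) = ‖x‖ ^ 2 := inner_self_eq_norm_sq x
  simpa only [h1, h2] using h

/-- The finite corner of the matrix of `X` in the Hilbert basis `e`. -/
noncomputable def corner (e : HilbertBasis J 𝕜 H) (F : Finset J) (X : H →L[𝕜] H) :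
    Matrix F F 𝕜 := fun i j => inner 𝕜 (e i) (X (e j))

lemma fro_corner_le (e : HilbertBasis J 𝕜 H) (F : Finset J) {X : H →L[𝕜] H}
    (hX : Summable fun i => ‖X (e i)‖ ^ 2) : fro (corner e F X) ≤ ∑' i, ‖X (e i)‖ ^ 2 := by
  unfold fro corner
  rw [Finset.sum_comm, Finset.sum_coe_sort F
    (fun j => ∑ i : F, ‖inner 𝕜 (e i) (X (e j))‖ ^ 2)]
  refine le_trans (Finset.sum_le_sum fun j _ => ?_)
    (hX.sum_le_tsum F fun _ _ => by positivity)
  rw [Finset.sum_coe_sort F (fun i => ‖inner 𝕜 (e i) (X (e j))‖ ^ 2)]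
  exact sum_le_hasSum F (fun _ _ => by positivity) (hasSum_norm_inner_sq e _)

variable [CompleteSpace H]

lemma corner_conjTranspose (e : HilbertBasis J 𝕜 H) (F : Finset J) {X : H →L[𝕜] H}
    (hX : adjoint X = -X) : (corner e F X).conjTranspose = -corner e F X := by
  ext i j
  simp only [corner, Matrix.conjTranspose_apply, Matrix.neg_apply, RCLike.star_def,
    inner_conj_symm]
  rw [← adjoint_inner_right, hX]
  simp

/-- The matrix entries of a product of operators are the limits of those of the products of
finite corners. -/
lemma tendsto_corner_mul (e : HilbertBasis J 𝕜 H) (X Y : H →L[𝕜] H) (i j : J) :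
    Tendsto (fun F : Finset J => ∑ k ∈ F, inner 𝕜 (e i) (X (e k)) * inner 𝕜 (e k) (Y (e j)))
      atTop (𝓝 (inner 𝕜 (e i) ((X * Y) (e j)))) := by
  have h := e.hasSum_inner_mul_inner (adjoint X (e i)) (Y (e j))
  simp only [adjoint_inner_left] at h
  exact h

/-- A commutator inequality for finite skew-Hermitian matrices, uniform in their size, passes to
skew-adjoint Hilbert–Schmidt operators. -/
lemma hs_comm_le {c : ℝ} (hc : 0 ≤ c)
    (hmat : ∀ (F : Finset J) (A B : Matrix F F 𝕜), A.conjTranspose = -A → B.conjTranspose = -B →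
      fro (A * B - B * A) ≤ c * (fro A * fro B))
    (e : HilbertBasis J 𝕜 H) {X Y : H →L[𝕜] H} (hX : adjoint X = -X) (hY : adjoint Y = -Y)
    (sX : Summable fun i => ‖X (e i)‖ ^ 2) (sY : Summable fun i => ‖Y (e i)‖ ^ 2) :
    ∑' i, ‖⁅X, Y⁆ (e i)‖ ^ 2 ≤ c * ((∑' i, ‖X (e i)‖ ^ 2) * ∑' i, ‖Y (e i)‖ ^ 2) := by
  set K := c * ((∑' i, ‖X (e i)‖ ^ 2) * ∑' i, ‖Y (e i)‖ ^ 2) with hK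
  have hent : ∀ G : Finset J,
      ∑ j ∈ G, ∑ i ∈ G, ‖inner 𝕜 (e i) (⁅X, Y⁆ (e j))‖ ^ 2 ≤ K := by
    intro G
    have hlim : Tendsto (fun F : Finset J => ∑ j ∈ G, ∑ i ∈ G,
        ‖∑ k ∈ F, inner 𝕜 (e i) (X (e k)) * inner 𝕜 (e k) (Y (e j))
          - ∑ k ∈ F, inner 𝕜 (e i) (Y (e k)) * inner 𝕜 (e k) (X (e j))‖ ^ 2) atTop
        (𝓝 (∑ j ∈ G, ∑ i ∈ G, ‖inner 𝕜 (e i) (⁅X, Y⁆ (e j))‖ ^ 2)) := by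
      refine tendsto_finsetSum _ fun j _ => tendsto_finsetSum _ fun i _ => ?_
      rw [Ring.lie_def, sub_apply, inner_sub_right]
      exact ((tendsto_corner_mul e X Y i j).sub (tendsto_corner_mul e Y X i j)).norm.pow 2
    -- For `F ⊇ G` the sum over `G` is part of the squared norm of a commutator of `F`-corners.
    refine le_of_tendsto hlim ((eventually_ge_atTop G).mono fun F hF => ?_)
    have h1 := hmat F _ _ (corner_conjTranspose e F hX) (corner_conjTranspose e F hY)
    have h2 : fro (corner e F X * corner e F Y - corner e F Y * corner e F X) =
        ∑ j ∈ F, ∑ i ∈ F, ‖∑ k ∈ F, inner 𝕜 (e i) (X (e k)) * inner 𝕜 (e k) (Y (e j))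
          - ∑ k ∈ F, inner 𝕜 (e i) (Y (e k)) * inner 𝕜 (e k) (X (e j))‖ ^ 2 := by
      simp only [fro, corner, Matrix.sub_apply, Matrix.mul_apply]
      rw [Finset.sum_comm, ← Finset.sum_coe_sort F]
      refine Finset.sum_congr rfl fun j _ => ?_
      rw [← Finset.sum_coe_sort F]
      refine Finset.sum_congr rfl fun i _ => ?_
      rw [← Finset.sum_coe_sort F, ← Finset.sum_coe_sort F]
    have h3 : c * (fro (corner e F X) * fro (corner e F Y)) ≤ K :=
      mul_le_mul_of_nonneg_left (mul_le_mul (fro_corner_le e F sX) (fro_corner_le e F sY)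
        (fro_nonneg _) (tsum_nonneg fun _ => by positivity)) hc
    refine le_trans ?_ ((h2.symm.le.trans h1).trans h3)
    refine (Finset.sum_le_sum fun j _ => Finset.sum_le_sum_of_subset_of_nonneg hF
      fun _ _ _ => by positivity).trans ?_
    exact Finset.sum_le_sum_of_subset_of_nonneg hF
      fun _ _ _ => Finset.sum_nonneg fun _ _ => by positivity
  -- This bound for finite partial sums also gives the summability of the left-hand side.
  refine Real.tsum_le_of_sum_le (fun _ => by positivity) fun G => ?_
  have hlim : Tendsto (fun F : Finset J => ∑ j ∈ G, ∑ i ∈ F,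
      ‖inner 𝕜 (e i) (⁅X, Y⁆ (e j))‖ ^ 2) atTop (𝓝 (∑ j ∈ G, ‖⁅X, Y⁆ (e j)‖ ^ 2)) :=
    tendsto_finsetSum _ fun j _ => hasSum_norm_inner_sq e _
  refine le_of_tendsto hlim ((eventually_ge_atTop G).mono fun F hF => ?_)
  exact (Finset.sum_le_sum_of_subset_of_nonneg hF
    fun _ _ _ => Finset.sum_nonneg fun _ _ => by positivity).trans (hent F)

end HilbertSchmidt

/-! ### Finite-rank operators with a prescribed matrix -/

section Models
open ContinuousLinearMap

variable {𝕜 H J m : Type*} [RCLike 𝕜] [NormedAddCommGroup H] [InnerProductSpace 𝕜 H] [Fintype m]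

/-- The finite-rank operator with matrix `A` on the span of the family `v`, vanishing on its
orthogonal complement (for orthonormal `v`). -/
noncomputable def ofMat (v : m → H) (A : Matrix m m 𝕜) : H →L[𝕜] H :=
  ∑ a, ∑ b, A a b • InnerProductSpace.rankOne 𝕜 (v a) (v b)

lemma ofMat_apply (v : m → H) (A : Matrix m m 𝕜) (x : H) :
    ofMat v A x = ∑ a, (∑ b, A a b * inner 𝕜 (v b) x) • v a := by
  simp [ofMat, sum_apply, Finset.sum_smul, smul_smul]

lemma inner_ofMat {v : m → H} (hv : Orthonormal 𝕜 v) (A : Matrix m m 𝕜) (x : H) (a : m) :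
    inner 𝕜 (v a) (ofMat v A x) = ∑ b, A a b * inner 𝕜 (v b) x := by
  rw [ofMat_apply]
  exact hv.inner_right_fintype _ a

lemma ofMat_mul {v : m → H} (hv : Orthonormal 𝕜 v) (A B : Matrix m m 𝕜) :
    ofMat v A * ofMat v B = ofMat v (A * B) := by
  ext x
  change ofMat v A (ofMat v B x) = _
  rw [ofMat_apply v A, ofMat_apply v (A * B)]
  refine Finset.sum_congr rfl fun a _ => ?_
  congr 1
  simp only [inner_ofMat hv, Matrix.mul_apply, Finset.mul_sum, Finset.sum_mul]
  rw [Finset.sum_comm]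
  simp only [mul_assoc]

lemma ofMat_sub (v : m → H) (A B : Matrix m m 𝕜) :
    ofMat v A - ofMat v B = ofMat v (A - B) := by
  simp [ofMat, sub_smul]

lemma ofMat_lie {v : m → H} (hv : Orthonormal 𝕜 v) (A B : Matrix m m 𝕜) :
    ⁅ofMat v A, ofMat v B⁆ = ofMat v (A * B - B * A) := by
  rw [Ring.lie_def, ofMat_mul hv, ofMat_mul hv, ofMat_sub]

lemma ofMat_adjoint [CompleteSpace H] (v : m → H) {A : Matrix m m 𝕜}
    (hA : A.conjTranspose = -A) : adjoint (ofMat v A) = -ofMat v A := by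
  have h : ∀ a b, (starRingEnd 𝕜) (A a b) = -A b a := fun a b => congrFun (congrFun hA b) a
  simp only [ofMat, map_sum, map_smulₛₗ, InnerProductSpace.adjoint_rankOne, h]
  rw [Finset.sum_comm]
  simp

lemma hasSum_ofMat (e : HilbertBasis J 𝕜 H) {v : m → H} (hv : Orthonormal 𝕜 v)
    (A : Matrix m m 𝕜) : HasSum (fun i => ‖ofMat v A (e i)‖ ^ 2) (fro A) := by
  have h1 : ∀ x, ‖ofMat v A x‖ ^ 2
      = ∑ a, ‖inner 𝕜 x (∑ b, (starRingEnd 𝕜) (A a b) • v b)‖ ^ 2 := by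
    intro x
    rw [ofMat_apply, ← RCLike.ofReal_inj (K := 𝕜)]
    push_cast
    rw [← inner_self_eq_norm_sq_to_K, hv.inner_sum]
    refine Finset.sum_congr rfl fun a _ => ?_
    rw [RCLike.conj_mul, inner_sum]
    congr 2
    rw [← RCLike.norm_conj, map_sum]
    simp [inner_smul_right]
  have h2 : ∀ a, ‖∑ b, (starRingEnd 𝕜) (A a b) • v b‖ ^ 2 = ∑ b, ‖A a b‖ ^ 2 := by
    intro a
    rw [← RCLike.ofReal_inj (K := 𝕜)]
    push_cast
    rw [← inner_self_eq_norm_sq_to_K, hv.inner_sum]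
    refine Finset.sum_congr rfl fun b _ => ?_
    rw [RCLike.conj_mul, RCLike.norm_conj]
  simp only [h1, fro, ← h2]
  exact hasSum_sum fun a _ => hasSum_norm_inner_sq e _

end Models

/-! ### Extremal matrices -/

section Examples
open Matrix

/-- The commutator of the scaled elements `s • diag(i, -i)` and `s • [[0, 1], [-1, 0]]` of `𝔰𝔲(2)`. -/
lemma pauli_comm (s : ℂ) :
    !![s * Complex.I, 0; 0, -(s * Complex.I)] * !![0, s; -s, 0]
      - !![0, s; -s, 0] * !![s * Complex.I, 0; 0, -(s * Complex.I)]
    = !![0, 2 * s ^ 2 * Complex.I; 2 * s ^ 2 * Complex.I, 0] := by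
  ext i j
  fin_cases i <;> fin_cases j <;> simp <;> ring

lemma pauli_skew_I (s : ℝ) : (!![(s : ℂ) * Complex.I, 0; 0, -((s : ℂ) * Complex.I)])ᴴ
    = -!![(s : ℂ) * Complex.I, 0; 0, -((s : ℂ) * Complex.I)] := by
  ext i j
  fin_cases i <;> fin_cases j <;> simp

lemma pauli_skew_J (s : ℝ) : (!![0, (s : ℂ); -(s : ℂ), 0])ᴴ = -!![0, (s : ℂ); -(s : ℂ), 0] := by
  ext i j
  fin_cases i <;> fin_cases j <;> simp

lemma fro_pauli_I (s : ℂ) : fro !![s * Complex.I, 0; 0, -(s * Complex.I)] = 2 * ‖s‖ ^ 2 := by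
  simp [fro, Fin.sum_univ_two]; ring

lemma fro_pauli_J (s : ℂ) : fro !![0, s; -s, 0] = 2 * ‖s‖ ^ 2 := by
  simp [fro, Fin.sum_univ_two]; ring

lemma fro_pauli_K (s : ℂ) :
    fro !![0, 2 * s ^ 2 * Complex.I; 2 * s ^ 2 * Complex.I, 0] = 8 * ‖s‖ ^ 4 := by
  simp [fro, Fin.sum_univ_two]; ring

/-- Half of left multiplication by the quaternion unit `i` on `ℝ⁴`. -/
noncomputable def quatI : Matrix (Fin 4) (Fin 4) ℝ :=
  !![0, -(1/2), 0, 0; 1/2, 0, 0, 0; 0, 0, 0, -(1/2); 0, 0, 1/2, 0]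

/-- Half of left multiplication by the quaternion unit `j` on `ℝ⁴`. -/
noncomputable def quatJ : Matrix (Fin 4) (Fin 4) ℝ :=
  !![0, 0, -(1/2), 0; 0, 0, 0, 1/2; 1/2, 0, 0, 0; 0, -(1/2), 0, 0]

lemma quatI_skew : quatIᴴ = -quatI := by
  ext i j; fin_cases i <;> fin_cases j <;> simp [quatI]

lemma quatJ_skew : quatJᴴ = -quatJ := by
  ext i j; fin_cases i <;> fin_cases j <;> simp [quatJ]

lemma fro_quatI : fro quatI = 1 := by
  simp [fro, quatI, Fin.sum_univ_four]; norm_num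

lemma fro_quatJ : fro quatJ = 1 := by
  simp [fro, quatJ, Fin.sum_univ_four]; norm_num

lemma quat_comm : quatI * quatJ - quatJ * quatI =
    !![0, 0, 0, -(1/2); 0, 0, -(1/2), 0; 0, 1/2, 0, 0; 1/2, 0, 0, 0] := by
  ext i j
  fin_cases i <;> fin_cases j <;> simp [quatI, quatJ] <;>
    norm_num

lemma fro_quat_comm : fro (quatI * quatJ - quatJ * quatI) = 1 := by
  rw [quat_comm]; simp [fro, Fin.sum_univ_four]; norm_num

end Examples

/-! ### The bracket-norm constants -/

section Constants
open ContinuousLinearMap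

/-- The bracket-norm constant is `√c` as soon as the commutator inequality holds with constant `c`
for finite matrices and some finite matrices attain it. -/
lemma cBracket_eq {𝕜 H J : Type*} [RCLike 𝕜] [NormedAddCommGroup H]
    [InnerProductSpace 𝕜 H] [CompleteSpace H] [Infinite J] (e : HilbertBasis J 𝕜 H)
    {c : ℝ} (hc : 0 ≤ c)
    (hmat : ∀ (F : Finset J) (A B : Matrix F F 𝕜), A.conjTranspose = -A → B.conjTranspose = -B →
      fro (A * B - B * A) ≤ c * (fro A * fro B))
    {d : ℕ} {A B : Matrix (Fin d) (Fin d) 𝕜} (hA : A.conjTranspose = -A)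
    (hB : B.conjTranspose = -B) (fA : fro A = 1) (fB : fro B = 1)
    (fAB : fro (A * B - B * A) = c) : cBracket e = √c := by
  refine IsGreatest.csSup_eq ⟨?_, ?_⟩
  -- Infinite dimension supplies the `d` basis vectors on which `A` and `B` act.
  · let v : Fin d → H := fun a => e (Infinite.natEmbedding J a)
    have hv : Orthonormal 𝕜 v :=
      e.orthonormal.comp _ ((Infinite.natEmbedding J).injective.comp Fin.val_injective)
    refine ⟨ofMat v A, ofMat v B, ofMat_adjoint v hA, ofMat_adjoint v hB,
      (hasSum_ofMat e hv A).summable, (hasSum_ofMat e hv B).summable,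
      ?_, ?_, ?_⟩
    · rw [(hasSum_ofMat e hv A).tsum_eq, fA]
    · rw [(hasSum_ofMat e hv B).tsum_eq, fB]
    · rw [ofMat_lie hv, (hasSum_ofMat e hv _).tsum_eq, fAB]
  · rintro r ⟨X, Y, hX, hY, sX, sY, nX, nY, rfl⟩
    refine Real.sqrt_le_sqrt ((hs_comm_le hc hmat e hX hY sX sY).trans ?_)
    have := mul_le_one₀ nX (tsum_nonneg fun i => by positivity) nY
    exact mul_le_of_le_one_right hc this

variable {H : Type*} [NormedAddCommGroup H] [InnerProductSpace ℂ H]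

/-- An antilinear isometry conjugates inner products, by polarization. -/
lemma inner_anticonj {K : H →L[ℝ] H}
    (hK : ∀ (c : ℂ) (v : H), K (c • v) = (starRingEnd ℂ c) • K v)
    (hiso : ∀ v, ‖K v‖ = ‖v‖) (x y : H) : inner ℂ (K x) (K y) = inner ℂ y x := by
  have h1 : ∀ v, Complex.I • K v = -K (Complex.I • v) := fun v => by rw [hK]; simp
  rw [← inner_conj_symm y x, inner_eq_sum_norm_sq_div_four, inner_eq_sum_norm_sq_div_four x y]
  simp only [RCLike.I_to_complex, h1, sub_neg_eq_add, ← sub_eq_add_neg, ← map_add, ← map_sub, hiso]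
  simp only [map_div₀, map_add, map_sub, map_mul, map_pow, Complex.conj_I, map_ofNat]
  simp
  ring

/-- A `2 × 2` matrix of the form `[[a, b], [-b̄, ā]]`, acting through the pair `u, K u`, gives an
operator commuting with the quaternionic structure `K`. -/
lemma ofMat_comm_anticonj {K : H →L[ℝ] H}
    (hK : ∀ (c : ℂ) (v : H), K (c • v) = (starRingEnd ℂ c) • K v)
    (hiso : ∀ v, ‖K v‖ = ‖v‖) (hsq : ∀ v, K (K v) = -v) (u : H) {A : Matrix (Fin 2) (Fin 2) ℂ}
    (h0 : A 1 1 = (starRingEnd ℂ) (A 0 0)) (h1 : A 1 0 = -(starRingEnd ℂ) (A 0 1)) :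
    K.comp ((ofMat ![u, K u] A).restrictScalars ℝ)
      = ((ofMat ![u, K u] A).restrictScalars ℝ).comp K := by
  ext x
  have e1 : inner ℂ (K u) (K x) = (starRingEnd ℂ) (inner ℂ u x) := by
    rw [inner_anticonj hK hiso, inner_conj_symm]
  have e2 : inner ℂ u (K x) = -(starRingEnd ℂ) (inner ℂ (K u) x) := by
    rw [inner_conj_symm, ← inner_anticonj hK hiso (K u) x, hsq, inner_neg_left, neg_neg]
  simp only [comp_apply, coe_restrictScalars', ofMat_apply, Fin.sum_univ_two, map_add, hK, hsq,
    Matrix.cons_val_zero, Matrix.cons_val_one, e1, e2, h0, h1, map_mul, map_neg,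
    Complex.conj_conj]
  module

lemma orthonormal_anticonj {K : H →L[ℝ] H}
    (hK : ∀ (c : ℂ) (v : H), K (c • v) = (starRingEnd ℂ c) • K v)
    (hiso : ∀ v, ‖K v‖ = ‖v‖) (hsq : ∀ v, K (K v) = -v) {u : H} (hu : ‖u‖ = 1) :
    Orthonormal ℂ ![u, K u] := by
  have h : inner ℂ u (K u) = 0 := by
    have := inner_anticonj hK hiso (K u) u
    rw [hsq, inner_neg_left] at this
    exact self_eq_neg.1 this.symm
  have h' : inner ℂ (K u) u = 0 := inner_eq_zero_symm.1 h
  constructor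
  · intro i; fin_cases i <;> simp [hiso, hu]
  · intro i j hij; fin_cases i <;> fin_cases j <;> simp_all

end Constants

/-- For `g = u₂(H)` over `𝕂 ∈ {ℝ, ℂ, ℍ}` (infinite-dimensional), the bracket-norm constant
`c_g` satisfies `c_g² = dim_ℝ 𝕂`: it is `√2` in the complex case, `1` in the real case, and
`2` in the quaternionic case (realized as complex-linear operators commuting with an
anticonjugation `J`, with the quaternionic Hilbert–Schmidt norm
`‖X‖²_ℍ = ½ Σ_i ‖X e_i‖²`). -/
theorem stmt_9
    {Hc : Type*} [NormedAddCommGroup Hc] [InnerProductSpace ℂ Hc] [CompleteSpace Hc]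
    {Jc : Type*} [Infinite Jc] (ec : HilbertBasis Jc ℂ Hc)
    {Hr : Type*} [NormedAddCommGroup Hr] [InnerProductSpace ℝ Hr] [CompleteSpace Hr]
    {Jr : Type*} [Infinite Jr] (er : HilbertBasis Jr ℝ Hr)
    {Hq : Type*} [NormedAddCommGroup Hq] [InnerProductSpace ℂ Hq] [CompleteSpace Hq]
    {Jq : Type*} [Infinite Jq] (eQ : HilbertBasis Jq ℂ Hq)
    (Jop : Hq →L[ℝ] Hq)
    (hJconj : ∀ (c : ℂ) (v : Hq), Jop (c • v) = (starRingEnd ℂ c) • Jop v)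
    (hJiso : ∀ v, ‖Jop v‖ = ‖v‖) (hJsq : ∀ v, Jop (Jop v) = -v) :
    cBracket ec = Real.sqrt 2
    ∧ cBracket er = 1
    ∧ sSup {r : ℝ | ∃ X Y : Hq →L[ℂ] Hq,
        ContinuousLinearMap.adjoint X = -X ∧ ContinuousLinearMap.adjoint Y = -Y ∧
        Jop.comp (X.restrictScalars ℝ) = (X.restrictScalars ℝ).comp Jop ∧
        Jop.comp (Y.restrictScalars ℝ) = (Y.restrictScalars ℝ).comp Jop ∧
        Summable (fun i => ‖X (eQ i)‖ ^ 2) ∧ Summable (fun i => ‖Y (eQ i)‖ ^ 2) ∧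
        (1 / 2) * (∑' i, ‖X (eQ i)‖ ^ 2) ≤ 1 ∧ (1 / 2) * (∑' i, ‖Y (eQ i)‖ ^ 2) ≤ 1 ∧
        r = Real.sqrt ((1 / 2) * ∑' i, ‖⁅X, Y⁆ (eQ i)‖ ^ 2)} = 2 := by
  refine ⟨?_, ?_, ?_⟩
  · have hs : ‖((√2)⁻¹ : ℝ)‖ ^ 2 = 1 / 2 := by
      rw [Real.norm_eq_abs, sq_abs, inv_pow, Real.sq_sqrt (by norm_num)]; norm_num
    refine cBracket_eq ec (by norm_num) (fun F A B hA _ => fro_comm_le_complex A B hA)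
      (pauli_skew_I (√2)⁻¹) (pauli_skew_J (√2)⁻¹) ?_ ?_ ?_
    · rw [fro_pauli_I, Complex.norm_real, hs]; norm_num
    · rw [fro_pauli_J, Complex.norm_real, hs]; norm_num
    · rw [pauli_comm, fro_pauli_K, Complex.norm_real, show 4 = 2 * 2 from rfl, pow_mul, hs]
      norm_num
  · rw [← Real.sqrt_one]
    exact cBracket_eq er (by norm_num) (fun F A B hA hB => fro_comm_le_real A B hA hB)
      quatI_skew quatJ_skew fro_quatI fro_quatJ fro_quat_comm
  · have four : √4 = (2 : ℝ) := by
      rw [show (4 : ℝ) = 2 ^ 2 by norm_num]; exact Real.sqrt_sq (by norm_num)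
    refine IsGreatest.csSup_eq ⟨?_, ?_⟩
    · obtain ⟨i⟩ : Nonempty Jq := inferInstance
      have hv := orthonormal_anticonj hJconj hJiso hJsq (eQ.orthonormal.1 i)
      have hI := hasSum_ofMat eQ hv !![((1 : ℝ) : ℂ) * Complex.I, 0; 0, -(((1 : ℝ) : ℂ) * Complex.I)]
      have hJ := hasSum_ofMat eQ hv !![0, ((1 : ℝ) : ℂ); -((1 : ℝ) : ℂ), 0]
      refine ⟨_, _, ofMat_adjoint _ (pauli_skew_I 1), ofMat_adjoint _ (pauli_skew_J 1),
        ofMat_comm_anticonj hJconj hJiso hJsq _ (by simp) (by simp),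
        ofMat_comm_anticonj hJconj hJiso hJsq _ (by simp) (by simp),
        hI.summable, hJ.summable, ?_, ?_, ?_⟩
      · rw [hI.tsum_eq, fro_pauli_I]; simp
      · rw [hJ.tsum_eq, fro_pauli_J]; simp
      · rw [ofMat_lie hv, (hasSum_ofMat eQ hv _).tsum_eq, pauli_comm, fro_pauli_K, ← four]
        congr 1; simp; norm_num
    · rintro r ⟨X, Y, hX, hY, -, -, sX, sY, nX, nY, rfl⟩
      rw [← four]
      refine Real.sqrt_le_sqrt ?_
      have h := hs_comm_le (by norm_num) (fun F A B hA _ => fro_comm_le_complex A B hA)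
        eQ hX hY sX sY
      have := mul_le_one₀ nX (mul_nonneg (by norm_num) (tsum_nonneg fun i => by positivity)) nY
      linarith
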